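/- If h is a biholomorphic automorphism of the upper half-plane Π = {ζ ∈ ℂ : Im ζ > 0} whose restriction to the strip Λ = {ζ ∈ ℂ : 0 < Im ζ < 1} maps Λ biholomorphically onto Λ, then there exists t ∈ ℝ such that h(ζ) = ζ + t for all ζ ∈ Π. -/

import Mathlib

/-!
`h` preserves the line `Im = 1`, which is the part of the boundary of `Λ` inside `Π`. By the
Schwarz–Pick lemma `h` does not increase the hyperbolic distance, and `log (Im z / c)` is the
hyperbolic distance from a point `z` above the line `Im = c` to that line. Hence `Im h(ζ) ≤ Im ζ`
for `Im ζ ≥ 1`. The inverse of `h` satisfies the same inequality, so `h(ζ) - ζ` is real for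
`Im ζ ≥ 1`, and a holomorphic function that is real on a nonempty open set is constant.
-/

open Set

open Filter Metric UpperHalfPlane
open scoped ComplexConjugate Topology

section SchwarzPick

/-- The Cayley transform centred at `a`: the biholomorphic map from the upper half-plane to the
unit disc that sends `a` to `0` and `∞` to `1`. -/
noncomputable def cayley (a : ℍ) (z : ℂ) : ℂ :=
  (z - a) / (z - conj (a : ℂ))

/-- The inverse of `cayley a`, as a map from the unit disc to the upper half-plane. -/
noncomputable def cayleyInv (a : ℍ) (u : ℂ) : ℂ :=
  (a - conj (a : ℂ) * u) / (1 - u)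

lemma sub_conj_ne_zero {z : ℂ} (hz : 0 < z.im) (a : ℍ) : z - conj (a : ℂ) ≠ 0 := by
  intro h
  have him : z.im + a.im = 0 := by simpa using congrArg Complex.im h
  linarith [a.im_pos]

lemma one_sub_ne_zero_of_mem_ball {u : ℂ} (hu : u ∈ ball (0 : ℂ) 1) : 1 - u ≠ 0 := by
  rw [sub_ne_zero]
  rintro rfl
  simp at hu

lemma norm_cayley (a z : ℍ) : ‖cayley a z‖ = Real.tanh (dist z a / 2) := by
  rw [tanh_half_dist, cayley, norm_div, Complex.dist_eq, Complex.dist_eq]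

lemma differentiableOn_cayley (a : ℍ) : DifferentiableOn ℂ (cayley a) upperHalfPlaneSet :=
  DifferentiableOn.div (by fun_prop) (by fun_prop) fun _ hz => sub_conj_ne_zero hz a

lemma differentiableOn_cayleyInv (a : ℍ) : DifferentiableOn ℂ (cayleyInv a) (ball 0 1) :=
  DifferentiableOn.div (by fun_prop) (by fun_prop) fun _ hu => one_sub_ne_zero_of_mem_ball hu

lemma mapsTo_cayley (a : ℍ) : MapsTo (cayley a) upperHalfPlaneSet (ball 0 1) := fun z hz => by
  rw [mem_ball_zero_iff, norm_cayley a ⟨z, hz⟩]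
  exact Real.tanh_lt_one _

lemma im_cayleyInv (a : ℍ) (u : ℂ) :
    (cayleyInv a u).im = a.im * (1 - Complex.normSq u) / Complex.normSq (1 - u) := by
  rw [cayleyInv, Complex.div_im, ← sub_div]
  congr 1
  simp only [Complex.sub_im, Complex.sub_re, Complex.mul_im, Complex.mul_re, Complex.conj_im,
    Complex.conj_re, Complex.one_im, Complex.one_re, Complex.normSq_apply, coe_im, coe_re]
  ring

lemma mapsTo_cayleyInv (a : ℍ) : MapsTo (cayleyInv a) (ball 0 1) upperHalfPlaneSet := by
  intro u hu
  have hnum : 0 < 1 - Complex.normSq u := by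
    rw [Complex.normSq_eq_norm_sq, sub_pos, sq_lt_one_iff₀ (norm_nonneg u)]
    exact mem_ball_zero_iff.1 hu
  have hden : 0 < Complex.normSq (1 - u) :=
    Complex.normSq_pos.2 (one_sub_ne_zero_of_mem_ball hu)
  rw [mem_ofPred_eq, im_cayleyInv]
  exact div_pos (mul_pos a.im_pos hnum) hden

lemma cayley_self (a : ℍ) : cayley a a = 0 := by
  simp [cayley]

lemma cayleyInv_zero (a : ℍ) : cayleyInv a 0 = a := by
  simp [cayleyInv]

lemma cayleyInv_cayley (a : ℍ) {z : ℂ} (hz : 0 < z.im) : cayleyInv a (cayley a z) = z := by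
  have hza := sub_conj_ne_zero hz a
  have haa := sub_conj_ne_zero a.im_pos a
  have hsub : 1 - (z - a) / (z - conj (a : ℂ)) = (a - conj (a : ℂ)) / (z - conj (a : ℂ)) := by
    field_simp
    ring
  rw [cayleyInv, cayley, hsub]
  field_simp
  ring

variable {f : ℂ → ℂ}

theorem dist_le_dist_of_differentiableOn_of_mapsTo (hf : DifferentiableOn ℂ f upperHalfPlaneSet)
    (hmaps : MapsTo f upperHalfPlaneSet upperHalfPlaneSet) (z w : ℍ) :
    dist (⟨f z, hmaps z.im_pos⟩ : ℍ) ⟨f w, hmaps w.im_pos⟩ ≤ dist z w := by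
  set fz : ℍ := ⟨f z, hmaps z.im_pos⟩
  set fw : ℍ := ⟨f w, hmaps w.im_pos⟩
  let F : ℂ → ℂ := cayley fw ∘ f ∘ cayleyInv w
  have hF_diff : DifferentiableOn ℂ F (ball 0 1) :=
    (differentiableOn_cayley fw).comp (hf.comp (differentiableOn_cayleyInv w) (mapsTo_cayleyInv w))
      (hmaps.comp (mapsTo_cayleyInv w))
  have hF_maps : MapsTo F (ball 0 1) (closedBall 0 1) :=
    ((mapsTo_cayley fw).comp (hmaps.comp (mapsTo_cayleyInv w))).mono_right ball_subset_closedBall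
  have hF_zero : F 0 = 0 := by
    simpa only [F, Function.comp_apply, cayleyInv_zero] using cayley_self fw
  have hF_cayley : F (cayley w z) = cayley fw fz := by
    simp only [F, Function.comp_apply, cayleyInv_cayley w z.im_pos, fz]
  have hschwarz : ‖F (cayley w z)‖ ≤ ‖cayley w z‖ :=
    Complex.norm_le_norm_of_mapsTo_ball hF_diff hF_maps hF_zero
      (mem_ball_zero_iff.1 (mapsTo_cayley w z.im_pos))
  rw [hF_cayley, norm_cayley, norm_cayley] at hschwarz
  have hartanh := Real.artanh_le_artanh (Real.neg_one_lt_tanh _) (Real.tanh_lt_one _) hschwarz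
  rw [Real.artanh_tanh, Real.artanh_tanh] at hartanh
  linarith

lemma im_le_im_of_mapsTo_line {c : ℝ} (hf : DifferentiableOn ℂ f upperHalfPlaneSet)
    (hmaps : MapsTo f upperHalfPlaneSet upperHalfPlaneSet) (hc : 0 < c)
    (hline : MapsTo f (Complex.im ⁻¹' {c}) (Complex.im ⁻¹' {c})) {z : ℂ} (hz : c ≤ z.im) :
    (f z).im ≤ z.im := by
  have hz_pos : 0 < z.im := hc.trans_le hz
  have hfz_pos : 0 < (f z).im := hmaps hz_pos
  let foot : ℍ := ⟨⟨z.re, c⟩, hc⟩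
  have hfoot : (f foot).im = c := hline rfl
  have hlog : Real.log (f z).im - Real.log c ≤ Real.log z.im - Real.log c :=
    calc Real.log (f z).im - Real.log c
        ≤ dist (Real.log (f z).im) (Real.log (f foot).im) := by
          rw [hfoot]
          exact le_abs_self _
      _ ≤ dist (⟨f z, hfz_pos⟩ : ℍ) ⟨f foot, hmaps foot.im_pos⟩ :=
          dist_log_im_le ⟨f z, hfz_pos⟩ ⟨f foot, hmaps foot.im_pos⟩
      _ ≤ dist (⟨z, hz_pos⟩ : ℍ) foot :=
          dist_le_dist_of_differentiableOn_of_mapsTo hf hmaps ⟨z, hz_pos⟩ foot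
      _ = dist (Real.log z.im) (Real.log c) := dist_of_re_eq rfl
      _ = Real.log z.im - Real.log c :=
          abs_of_nonneg (sub_nonneg.2 (Real.log_le_log hc hz))
  exact (Real.log_le_log_iff hfz_pos hz_pos).1 (by linarith)

end SchwarzPick

lemma mapsTo_sdiff_compl_of_injOn {α β : Type*} {f : α → β} {s u : Set α} {t : Set β}
    (hinj : InjOn f u) (hsu : s ⊆ u) (hsurj : SurjOn f s t) : MapsTo f (u \ s) tᶜ :=
  fun _ hx hfx => hx.2 (hinj.mem_of_mem_image hsu hx.1 (hsurj hfx))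

section Strip

variable {f g : ℂ → ℂ} {c : ℝ}

lemma mapsTo_im_Ici_of_surjOn_strip (hmaps : MapsTo f upperHalfPlaneSet upperHalfPlaneSet)
    (hinj : InjOn f upperHalfPlaneSet) (hc : 0 < c)
    (hsurj : SurjOn f (Complex.im ⁻¹' Ioo 0 c) (Complex.im ⁻¹' Ioo 0 c)) :
    MapsTo f (Complex.im ⁻¹' Ici c) (Complex.im ⁻¹' Ici c) := by
  intro z hz
  have hz_pos : 0 < z.im := hc.trans_le hz
  have hfz : f z ∉ Complex.im ⁻¹' Ioo 0 c :=
    mapsTo_sdiff_compl_of_injOn hinj (fun _ hw => hw.1) hsurj ⟨hz_pos, fun hlt => hlt.2.not_ge hz⟩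
  exact not_lt.1 fun hlt => hfz ⟨hmaps hz_pos, hlt⟩

lemma mapsTo_line_of_bijOn_strip (hcont : ContinuousOn f upperHalfPlaneSet)
    (hmaps : MapsTo f upperHalfPlaneSet upperHalfPlaneSet) (hinj : InjOn f upperHalfPlaneSet)
    (hc : 0 < c) (hstrip : BijOn f (Complex.im ⁻¹' Ioo 0 c) (Complex.im ⁻¹' Ioo 0 c)) :
    MapsTo f (Complex.im ⁻¹' {c}) (Complex.im ⁻¹' {c}) := by
  rintro z (hz : z.im = c)
  have hclosure : closure (Complex.im ⁻¹' Ioo 0 c) = Complex.im ⁻¹' Icc 0 c := by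
    rw [Complex.closure_preimage_im, closure_Ioo hc.ne]
  have hz_mem : z ∈ closure (Complex.im ⁻¹' Ioo 0 c) := by
    rw [hclosure]
    exact ⟨hz ▸ hc.le, hz.le⟩
  have hcont_z : ContinuousWithinAt f (Complex.im ⁻¹' Ioo 0 c) z :=
    (hcont z (hc.trans_le hz.ge)).mono fun _ hw => hw.1
  have hfz_mem : f z ∈ closure (Complex.im ⁻¹' Ioo 0 c) :=
    hcont_z.mem_closure hz_mem hstrip.mapsTo
  rw [hclosure] at hfz_mem
  exact le_antisymm hfz_mem.2 (mapsTo_im_Ici_of_surjOn_strip hmaps hinj hc hstrip.surjOn hz.ge)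

lemma im_eq_im_of_bijOn_strip (hf : DifferentiableOn ℂ f upperHalfPlaneSet)
    (hg : DifferentiableOn ℂ g upperHalfPlaneSet)
    (hbij : BijOn f upperHalfPlaneSet upperHalfPlaneSet)
    (hinv : InvOn g f upperHalfPlaneSet upperHalfPlaneSet) (hc : 0 < c)
    (hstrip : BijOn f (Complex.im ⁻¹' Ioo 0 c) (Complex.im ⁻¹' Ioo 0 c))
    {z : ℂ} (hz : c ≤ z.im) : (f z).im = z.im := by
  have hbij_inv : BijOn g upperHalfPlaneSet upperHalfPlaneSet := hbij.symm hinv.symm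
  have hstrip_inv : BijOn g (Complex.im ⁻¹' Ioo 0 c) (Complex.im ⁻¹' Ioo 0 c) :=
    hstrip.symm (hinv.symm.mono (fun _ hw => hw.1) fun _ hw => hw.1)
  have hfz : c ≤ (f z).im :=
    mapsTo_im_Ici_of_surjOn_strip hbij.mapsTo hbij.injOn hc hstrip.surjOn hz
  have hle : (f z).im ≤ z.im := im_le_im_of_mapsTo_line hf hbij.mapsTo hc
    (mapsTo_line_of_bijOn_strip hf.continuousOn hbij.mapsTo hbij.injOn hc hstrip) hz
  have hge : (g (f z)).im ≤ (f z).im := im_le_im_of_mapsTo_line hg hbij_inv.mapsTo hc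
    (mapsTo_line_of_bijOn_strip hg.continuousOn hbij_inv.mapsTo hbij_inv.injOn hc hstrip_inv) hfz
  rw [hinv.1 (hc.trans_le hz)] at hge
  exact le_antisymm hle hge

end Strip

lemma exists_eqOn_add_ofReal_of_eventually_im_eq {f : ℂ → ℂ} {u : Set ℂ} {z₀ : ℂ}
    (hf : DifferentiableOn ℂ f u) (hu_open : IsOpen u) (hu_conn : IsPreconnected u) (hz₀ : z₀ ∈ u)
    (him : ∀ᶠ z in 𝓝 z₀, (f z).im = z.im) :
    ∃ t : ℝ, EqOn f (fun z => z + t) u := by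
  have hf_an : AnalyticOnNhd ℂ f u := hf.analyticOnNhd hu_open
  obtain ⟨r, hr, hball⟩ := eventually_nhds_iff_ball.1 (him.and (hu_open.mem_nhds hz₀))
  have hsub_an : AnalyticOnNhd ℂ (fun z => f z - z) (ball z₀ r) :=
    (hf_an.mono fun z hz => (hball z hz).2).sub analyticOnNhd_id
  have hsub_im : ∀ z ∈ ball z₀ r, (f z - z).im = 0 := fun z hz => by
    rw [Complex.sub_im, (hball z hz).1, sub_self]
  obtain ⟨t, ht⟩ := hsub_an.eq_const_add_im_mul_I_of_re_eq_const hsub_im isOpen_ball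
    (isConnected_ball hr)
  have heq : f =ᶠ[𝓝 z₀] fun z => z + t := by
    filter_upwards [ball_mem_nhds z₀ hr] with z hz
    simpa [sub_eq_iff_eq_add'] using ht z hz
  exact ⟨t, hf_an.eqOn_of_preconnected_of_eventuallyEq (analyticOnNhd_id.add analyticOnNhd_const)
    hu_conn hz₀ heq⟩

/-- If `h` is a biholomorphic automorphism of the upper half-plane
`Π = {ζ : 0 < Im ζ}` (a holomorphic bijection of `Π` with holomorphic inverse `h'`) whose
restriction to the strip `Λ = {ζ : 0 < Im ζ < 1}` maps `Λ` bijectively onto `Λ`, then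
`h` is the translation `ζ ↦ ζ + t` for some real `t`. -/
theorem aut_of_halfplane_preserving_strip_is_translation
    (h h' : ℂ → ℂ)
    (hhol : DifferentiableOn ℂ h {ζ : ℂ | 0 < ζ.im})
    (hbij : Set.BijOn h {ζ : ℂ | 0 < ζ.im} {ζ : ℂ | 0 < ζ.im})
    (hinvhol : DifferentiableOn ℂ h' {ζ : ℂ | 0 < ζ.im})
    (hinv : Set.InvOn h' h {ζ : ℂ | 0 < ζ.im} {ζ : ℂ | 0 < ζ.im})
    (hstrip : Set.BijOn h {ζ : ℂ | 0 < ζ.im ∧ ζ.im < 1} {ζ : ℂ | 0 < ζ.im ∧ ζ.im < 1}) :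
    ∃ t : ℝ, ∀ ζ : ℂ, 0 < ζ.im → h ζ = ζ + (t : ℂ) := by
  have him : ∀ ζ : ℂ, 1 ≤ ζ.im → (h ζ).im = ζ.im := fun _ hζ =>
    im_eq_im_of_bijOn_strip hhol hinvhol hbij hinv one_pos hstrip hζ
  have him_near : ∀ᶠ ζ in 𝓝 (2 * Complex.I), (h ζ).im = ζ.im := by
    have hnhds : ∀ᶠ ζ : ℂ in 𝓝 (2 * Complex.I), 1 < ζ.im :=
      Complex.continuous_im.continuousAt.eventually_const_lt (by simp)
    exact hnhds.mono fun ζ hζ => him ζ hζ.le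
  obtain ⟨t, ht⟩ := exists_eqOn_add_ofReal_of_eventually_im_eq hhol isOpen_upperHalfPlaneSet
    (convex_halfSpace_im_gt 0).isPreconnected (by simp) him_near
  exact ⟨t, fun ζ hζ => ht hζ⟩
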